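/- Let 𝒜 be a weakly idempotent complete exact category, 𝒳 and 𝒴 full additive subcategories of 𝒜 closed under isomorphisms and direct summands, and ω = 𝒳∩𝒴. The following are equivalent: (1) (𝒳,𝒴) is a generalized projective complete cotorsion pair (i.e. a complete cotorsion pair with 𝒴 thick and 𝒳∩𝒴 = 𝒫 the class of projective objects) and 𝒜 has enough projective objects; (2) (𝒳,𝒴) is a hereditary complete cotorsion pair, 𝒜 has enough projective objects, and ω = 𝒫; (3) (CoFib_ω, Fib_ω, Weq_ω) is an exact model structure on 𝒜; (4) (CoFib_ω, Fib_ω, Weq_ω) is a projective model structure on 𝒜. -/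

import Mathlib

open CategoryTheory Limits ZeroObject

universe v u

/-- An exact structure (Quillen exact category) on an additive category `𝒜`:
a class of conflations (kernel-cokernel pairs), closed under isomorphisms,
with identities deflations, deflations closed under composition and stable
under pullback, and inflations stable under pushout. -/
structure ExactStructure (𝒜 : Type u) [Category.{v} 𝒜] [Preadditive 𝒜]
    [HasZeroObject 𝒜] [HasBinaryBiproducts 𝒜] : Type (max u v) where
  conflation : ∀ ⦃X Y Z : 𝒜⦄, (X ⟶ Y) → (Y ⟶ Z) → Prop
  comp_zero : ∀ {X Y Z : 𝒜} {i : X ⟶ Y} {d : Y ⟶ Z}, conflation i d → i ≫ d = 0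
  isKernel : ∀ {X Y Z : 𝒜} {i : X ⟶ Y} {d : Y ⟶ Z} (h : conflation i d),
    Nonempty (IsLimit (KernelFork.ofι i (comp_zero h)))
  isCokernel : ∀ {X Y Z : 𝒜} {i : X ⟶ Y} {d : Y ⟶ Z} (h : conflation i d),
    Nonempty (IsColimit (CokernelCofork.ofπ d (comp_zero h)))
  conflation_iso : ∀ {X Y Z X' Y' Z' : 𝒜} {i : X ⟶ Y} {d : Y ⟶ Z}
    (eX : X ≅ X') (eY : Y ≅ Y') (eZ : Z ≅ Z') {i' : X' ⟶ Y'} {d' : Y' ⟶ Z'},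
    conflation i d → i ≫ eY.hom = eX.hom ≫ i' → d ≫ eZ.hom = eY.hom ≫ d' →
    conflation i' d'
  id_deflation : ∀ X : 𝒜, conflation (0 : (0 : 𝒜) ⟶ X) (𝟙 X)
  deflation_comp : ∀ {X Y Z X' W : 𝒜} {i : X ⟶ Y} {d : Y ⟶ Z} {i' : X' ⟶ Z} {d' : Z ⟶ W},
    conflation i d → conflation i' d' → ∃ (K : 𝒜) (k : K ⟶ Y), conflation k (d ≫ d')
  pullback_deflation : ∀ {X Y Z Z' : 𝒜} {i : X ⟶ Y} {d : Y ⟶ Z},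
    conflation i d → ∀ (f : Z' ⟶ Z),
    ∃ (Y' : 𝒜) (f' : Y' ⟶ Y) (d' : Y' ⟶ Z') (K : 𝒜) (k : K ⟶ Y'),
      IsPullback f' d' d f ∧ conflation k d'
  pushout_inflation : ∀ {X Y Z X' : 𝒜} {i : X ⟶ Y} {d : Y ⟶ Z},
    conflation i d → ∀ (f : X ⟶ X'),
    ∃ (Y' : 𝒜) (f' : Y ⟶ Y') (i' : X' ⟶ Y') (Q : 𝒜) (q : Y' ⟶ Q),
      IsPushout i f f' i' ∧ conflation i' q

variable {𝒜 : Type u} [Category.{v} 𝒜] [Preadditive 𝒜] [HasZeroObject 𝒜]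
  [HasBinaryBiproducts 𝒜]

/-- `f` is an inflation: the first map of some conflation. -/
def IsInflation (E : ExactStructure 𝒜) {X Y : 𝒜} (i : X ⟶ Y) : Prop :=
  ∃ (Z : 𝒜) (d : Y ⟶ Z), E.conflation i d

/-- `f` is a deflation: the second map of some conflation. -/
def IsDeflation (E : ExactStructure 𝒜) {Y Z : 𝒜} (d : Y ⟶ Z) : Prop :=
  ∃ (X : 𝒜) (i : X ⟶ Y), E.conflation i d

/-- `𝒜` is weakly idempotent complete: every split epimorphism is a deflation. -/
def IsWIC (E : ExactStructure 𝒜) : Prop :=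
  ∀ {X Y : 𝒜} (d : X ⟶ Y) (s : Y ⟶ X), s ≫ d = 𝟙 Y → IsDeflation E d

/-- `Ext¹(A,B) = 0`: every conflation `B ⟶ M ⟶ A` splits. -/
def Ext1IsZero (E : ExactStructure 𝒜) (A B : 𝒜) : Prop :=
  ∀ {M : 𝒜} (i : B ⟶ M) (d : M ⟶ A), E.conflation i d → ∃ r : M ⟶ B, i ≫ r = 𝟙 B

/-- `(X, Y)` is a cotorsion pair: each class is the `Ext¹`-orthogonal of the other. -/
def IsCotorsionPair (E : ExactStructure 𝒜) (X Y : Set 𝒜) : Prop :=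
  (∀ A : 𝒜, A ∈ X ↔ ∀ B ∈ Y, Ext1IsZero E A B) ∧
  (∀ B : 𝒜, B ∈ Y ↔ ∀ A ∈ X, Ext1IsZero E A B)

/-- Completeness of a cotorsion pair: every object has approximation sequences. -/
def IsCompleteCP (E : ExactStructure 𝒜) (X Y : Set 𝒜) : Prop :=
  ∀ A : 𝒜,
    (∃ (Y₀ X₀ : 𝒜) (i : Y₀ ⟶ X₀) (d : X₀ ⟶ A), E.conflation i d ∧ X₀ ∈ X ∧ Y₀ ∈ Y) ∧
    (∃ (Y₁ X₁ : 𝒜) (i : A ⟶ Y₁) (d : Y₁ ⟶ X₁), E.conflation i d ∧ X₁ ∈ X ∧ Y₁ ∈ Y)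

/-- Heredity of a cotorsion pair: `X` is closed under kernels of deflations and
`Y` is closed under cokernels of inflations. -/
def IsHereditaryCP (E : ExactStructure 𝒜) (X Y : Set 𝒜) : Prop :=
  (∀ {K A B : 𝒜} (i : K ⟶ A) (d : A ⟶ B), E.conflation i d → A ∈ X → B ∈ X → K ∈ X) ∧
  (∀ {K A B : 𝒜} (i : K ⟶ A) (d : A ⟶ B), E.conflation i d → K ∈ Y → A ∈ Y → B ∈ Y)

/-- `t : W ⟶ B` is a right `ω`-approximation of `B`. -/
def IsRightApprox (ω : Set 𝒜) {W B : 𝒜} (t : W ⟶ B) : Prop :=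
  W ∈ ω ∧ ∀ (W' : 𝒜), W' ∈ ω → ∀ g : W' ⟶ B, ∃ h : W' ⟶ W, h ≫ t = g

/-- `ω` is contravariantly finite: every object has a right `ω`-approximation. -/
def IsContravariantlyFinite (ω : Set 𝒜) : Prop :=
  ∀ B : 𝒜, ∃ (W : 𝒜) (t : W ⟶ B), IsRightApprox ω t

/-- A full additive subcategory closed under isomorphisms and direct summands,
viewed as a class of objects. -/
def AdditivelyClosed (S : Set 𝒜) : Prop :=
  (0 : 𝒜) ∈ S ∧ (∀ A B : 𝒜, A ∈ S → B ∈ S → (A ⊞ B) ∈ S) ∧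
  (∀ {A B : 𝒜}, (A ≅ B) → A ∈ S → B ∈ S) ∧
  (∀ {A B : 𝒜} (i : A ⟶ B) (r : B ⟶ A), i ≫ r = 𝟙 A → B ∈ S → A ∈ S)

/-- `CoFib_ω`: inflations with cokernel in `X`. -/
def CoFibO (E : ExactStructure 𝒜) (X : Set 𝒜) : MorphismProperty 𝒜 :=
  fun _ B f => ∃ (Z : 𝒜) (d : B ⟶ Z), E.conflation f d ∧ Z ∈ X

/-- `Fib_ω`: the `ω`-epic morphisms. -/
def FibO (ω : Set 𝒜) : MorphismProperty 𝒜 :=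
  fun A B f => ∀ (W : 𝒜), W ∈ ω → ∀ g : W ⟶ B, ∃ h : W ⟶ A, h ≫ f = g

/-- `Weq_ω`: morphisms `f : A ⟶ B` such that for some `W ∈ ω` and `t : W ⟶ B`,
`(f,t) : A ⊞ W ⟶ B` is a deflation with kernel in `Y`. -/
def WeqO (E : ExactStructure 𝒜) (ω Y : Set 𝒜) : MorphismProperty 𝒜 :=
  fun A B f => ∃ (W : 𝒜) (_ : W ∈ ω) (t : W ⟶ B) (K : 𝒜) (k : K ⟶ A ⊞ W),
    E.conflation k (biprod.desc f t) ∧ K ∈ Y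

/-- `TCoFib_ω`: split monomorphisms with cokernel in `ω`. -/
def TCoFibO (E : ExactStructure 𝒜) (ω : Set 𝒜) : MorphismProperty 𝒜 :=
  fun A B f => (∃ r : B ⟶ A, f ≫ r = 𝟙 A) ∧
    ∃ (Z : 𝒜) (d : B ⟶ Z), E.conflation f d ∧ Z ∈ ω

/-- `TFib_ω`: deflations with kernel in `Y`. -/
def TFibO (E : ExactStructure 𝒜) (Y : Set 𝒜) : MorphismProperty 𝒜 :=
  fun A _ f => ∃ (K : 𝒜) (k : K ⟶ A), E.conflation k f ∧ K ∈ Y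

/-- `g` is a retract of `f`. -/
def IsRetractMor {A' B' A B : 𝒜} (g : A' ⟶ B') (f : A ⟶ B) : Prop :=
  ∃ (φ₁ : A' ⟶ A) (ψ₁ : A ⟶ A') (φ₂ : B' ⟶ B) (ψ₂ : B ⟶ B'),
    φ₁ ≫ ψ₁ = 𝟙 A' ∧ φ₂ ≫ ψ₂ = 𝟙 B' ∧ φ₁ ≫ f = g ≫ φ₂ ∧ f ≫ ψ₂ = ψ₁ ≫ g

/-- A (closed, Quillen) model structure, given by classes of cofibrations,
fibrations and weak equivalences. -/
structure IsModelStructure (C F W : MorphismProperty 𝒜) : Prop where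
  weq_comp : ∀ {X Y Z : 𝒜} (f : X ⟶ Y) (g : Y ⟶ Z), W f → W g → W (f ≫ g)
  weq_cancel_left : ∀ {X Y Z : 𝒜} (f : X ⟶ Y) (g : Y ⟶ Z), W f → W (f ≫ g) → W g
  weq_cancel_right : ∀ {X Y Z : 𝒜} (f : X ⟶ Y) (g : Y ⟶ Z), W g → W (f ≫ g) → W f
  retract_cofib : ∀ {A' B' A B : 𝒜} (g : A' ⟶ B') (f : A ⟶ B),
    IsRetractMor g f → C f → C g
  retract_fib : ∀ {A' B' A B : 𝒜} (g : A' ⟶ B') (f : A ⟶ B),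
    IsRetractMor g f → F f → F g
  retract_weq : ∀ {A' B' A B : 𝒜} (g : A' ⟶ B') (f : A ⟶ B),
    IsRetractMor g f → W f → W g
  lifting_left : ∀ {A B X Y : 𝒜} (i : A ⟶ B) (p : X ⟶ Y) (a : A ⟶ X) (b : B ⟶ Y),
    C i → W i → F p → a ≫ p = i ≫ b → ∃ s : B ⟶ X, i ≫ s = a ∧ s ≫ p = b
  lifting_right : ∀ {A B X Y : 𝒜} (i : A ⟶ B) (p : X ⟶ Y) (a : A ⟶ X) (b : B ⟶ Y),
    C i → F p → W p → a ≫ p = i ≫ b → ∃ s : B ⟶ X, i ≫ s = a ∧ s ≫ p = b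
  fact_left : ∀ {A B : 𝒜} (f : A ⟶ B), ∃ (Z : 𝒜) (i : A ⟶ Z) (p : Z ⟶ B),
    i ≫ p = f ∧ C i ∧ W i ∧ F p
  fact_right : ∀ {A B : 𝒜} (f : A ⟶ B), ∃ (Z : 𝒜) (j : A ⟶ Z) (q : Z ⟶ B),
    j ≫ q = f ∧ C j ∧ F q ∧ W q

/-- An object is cofibrant if `0 ⟶ X` is a cofibration. -/
def Cofibrant (C : MorphismProperty 𝒜) (A : 𝒜) : Prop := C (0 : (0 : 𝒜) ⟶ A)

/-- An object is fibrant if `X ⟶ 0` is a fibration. -/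
def Fibrant (F : MorphismProperty 𝒜) (A : 𝒜) : Prop := F (0 : A ⟶ (0 : 𝒜))

/-- An object is trivial if `0 ⟶ X` is a weak equivalence. -/
def TrivialObj (W : MorphismProperty 𝒜) (A : 𝒜) : Prop := W (0 : (0 : 𝒜) ⟶ A)

/-- `P` is projective in the exact category. -/
def IsProjObj (E : ExactStructure 𝒜) (P : 𝒜) : Prop :=
  ∀ {A B : 𝒜} (d : A ⟶ B), IsDeflation E d → ∀ g : P ⟶ B, ∃ h : P ⟶ A, h ≫ d = g

/-- The exact category has enough projective objects. -/
def HasEnoughProj (E : ExactStructure 𝒜) : Prop :=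
  ∀ X : 𝒜, ∃ (P : 𝒜) (d : P ⟶ X), IsProjObj E P ∧ IsDeflation E d

/-- Cofibrations are exactly the inflations with cofibrant cokernel. -/
def CofibsAreInflWithCofibCoker (E : ExactStructure 𝒜) (C : MorphismProperty 𝒜) : Prop :=
  ∀ {A B : 𝒜} (f : A ⟶ B),
    C f ↔ ∃ (Z : 𝒜) (d : B ⟶ Z), E.conflation f d ∧ Cofibrant C Z

/-- Fibrations are exactly the deflations with fibrant kernel. -/
def FibsAreDeflWithFibKer (E : ExactStructure 𝒜) (F : MorphismProperty 𝒜) : Prop :=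
  ∀ {A B : 𝒜} (f : A ⟶ B),
    F f ↔ ∃ (K : 𝒜) (k : K ⟶ A), E.conflation k f ∧ Fibrant F K

/-- Trivial fibrations are exactly the deflations with trivially fibrant kernel. -/
def TrivFibsAreDeflWithTrivFibKer (E : ExactStructure 𝒜)
    (F W : MorphismProperty 𝒜) : Prop :=
  ∀ {A B : 𝒜} (f : A ⟶ B),
    (F f ∧ W f) ↔ ∃ (K : 𝒜) (k : K ⟶ A), E.conflation k f ∧ Fibrant F K ∧ TrivialObj W K

/-- Every cofibration is an inflation. -/
def CofibsAreInfl (E : ExactStructure 𝒜) (C : MorphismProperty 𝒜) : Prop :=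
  ∀ {A B : 𝒜} (f : A ⟶ B), C f → IsInflation E f

/-- Every trivial fibration is a deflation. -/
def TrivFibsAreDefl (E : ExactStructure 𝒜) (F W : MorphismProperty 𝒜) : Prop :=
  ∀ {A B : 𝒜} (f : A ⟶ B), F f → W f → IsDeflation E f

/-- An exact model structure in the sense of Gillespie. -/
def IsExactModelStr (E : ExactStructure 𝒜) (C F W : MorphismProperty 𝒜) : Prop :=
  IsModelStructure C F W ∧ CofibsAreInflWithCofibCoker E C ∧ FibsAreDeflWithFibKer E F

/-- A weakly projective model structure: every object is fibrant, cofibrations are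
exactly the inflations with cofibrant cokernel, and trivial fibrations are exactly
the deflations with trivially fibrant kernel. -/
def IsWeaklyProjModelStr (E : ExactStructure 𝒜) (C F W : MorphismProperty 𝒜) : Prop :=
  IsModelStructure C F W ∧ (∀ A : 𝒜, Fibrant F A) ∧
    CofibsAreInflWithCofibCoker E C ∧ TrivFibsAreDeflWithTrivFibKer E F W

/-- A projective model structure: an exact model structure with every object fibrant. -/
def IsProjectiveModelStr (E : ExactStructure 𝒜) (C F W : MorphismProperty 𝒜) : Prop :=
  IsExactModelStr E C F W ∧ (∀ A : 𝒜, Fibrant F A)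

/-- A class of objects is thick: closed under direct summands and two-out-of-three
in conflations. -/
def IsThick (E : ExactStructure 𝒜) (S : Set 𝒜) : Prop :=
  (∀ {A B : 𝒜} (i : A ⟶ B) (r : B ⟶ A), i ≫ r = 𝟙 A → B ∈ S → A ∈ S) ∧
  (∀ {X Y Z : 𝒜} (i : X ⟶ Y) (d : Y ⟶ Z), E.conflation i d →
    ((X ∈ S → Y ∈ S → Z ∈ S) ∧ (X ∈ S → Z ∈ S → Y ∈ S) ∧ (Y ∈ S → Z ∈ S → X ∈ S)))

/-!
Let `𝒫` be the class of projective objects. By Heller's cancellation law (if `g ≫ f` is a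
deflation, so is `f`) the `𝒫`-fibrations are the deflations. By comparing retracts, `f : A ⟶ B` is a
weak equivalence if and only if `ker (f, t)` lies in `Y` for any one deflation `(f, t) : A ⊞ P ⟶ B`
with `P` projective. For composable `f` and `g` these kernels form a conflation
`K_f ⟶ K_{gf} ⟶ K_g`, so that two-out-of-three for weak equivalences becomes two-out-of-three for
`Y`, and a trivial cofibration splits with projective cokernel. Conversely, in the model structure,
factoring `0 ⟶ A` and `A ⟶ 0` gives the approximation sequences of the cotorsion pair, and
two-out-of-three for `B ⟶ C ⟶ 0` gives the closure of `Y` under cokernels.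
-/

section

variable {E : ExactStructure 𝒜}

/-! ### Conflations -/

namespace ExactStructure.conflation

variable {A B C : 𝒜} {i : A ⟶ B} {d : B ⟶ C}

lemma mono (h : E.conflation i d) : Mono i :=
  mono_of_isLimit_fork (E.isKernel h).some

lemma epi (h : E.conflation i d) : Epi d :=
  epi_of_isColimit_cofork (E.isCokernel h).some

lemma exists_lift (h : E.conflation i d) {T : 𝒜} (x : T ⟶ B) (hx : x ≫ d = 0) :
    ∃ y : T ⟶ A, y ≫ i = x :=
  ⟨_, (KernelFork.IsLimit.lift' (E.isKernel h).some x hx).2⟩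

lemma exists_desc (h : E.conflation i d) {T : 𝒜} (x : B ⟶ T) (hx : i ≫ x = 0) :
    ∃ y : C ⟶ T, d ≫ y = x :=
  ⟨_, (CokernelCofork.IsColimit.desc' (E.isCokernel h).some x hx).2⟩

end ExactStructure.conflation

lemma IsDeflation.conflation_of_exists_lift {K B C : 𝒜} {k : K ⟶ B} {d : B ⟶ C}
    (hd : IsDeflation E d) [Mono k] (w : k ≫ d = 0)
    (hk : ∀ {T : 𝒜} (x : T ⟶ B), x ≫ d = 0 → ∃ y : T ⟶ K, y ≫ k = x) :
    E.conflation k d := by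
  obtain ⟨L, l, h⟩ := hd
  have := h.mono
  obtain ⟨a, ha⟩ := h.exists_lift k w
  obtain ⟨b, hb⟩ := hk l (E.comp_zero h)
  have hba : b ≫ a = 𝟙 L := by simp [← cancel_mono l, ha, hb]
  have hab : a ≫ b = 𝟙 K := by simp [← cancel_mono k, ha, hb]
  exact E.conflation_iso ⟨b, a, hba, hab⟩ (Iso.refl _) (Iso.refl _) h (by simp [hb]) (by simp)

lemma IsInflation.conflation_of_exists_desc {A B Q : 𝒜} {i : A ⟶ B} {q : B ⟶ Q}
    (hi : IsInflation E i) [Epi q] (w : i ≫ q = 0)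
    (hq : ∀ {T : 𝒜} (x : B ⟶ T), i ≫ x = 0 → ∃ y : Q ⟶ T, q ≫ y = x) :
    E.conflation i q := by
  obtain ⟨L, l, h⟩ := hi
  have := h.epi
  obtain ⟨a, ha⟩ := h.exists_desc q w
  obtain ⟨b, hb⟩ := hq l (E.comp_zero h)
  have hab : a ≫ b = 𝟙 L := by simp [← cancel_epi l, reassoc_of% ha, hb]
  have hba : b ≫ a = 𝟙 Q := by simp [← cancel_epi q, ha, reassoc_of% hb]
  exact E.conflation_iso (Iso.refl _) (Iso.refl _) ⟨a, b, hab, hba⟩ h (by simp) (by simp [ha])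

lemma IsDeflation.of_isPullback {A B C D : 𝒜} {f' : A ⟶ B} {d' : A ⟶ D} {d : B ⟶ C} {f : D ⟶ C}
    (hd : IsDeflation E d) (hp : IsPullback f' d' d f) : IsDeflation E d' := by
  obtain ⟨_, _, h⟩ := hd
  obtain ⟨P, p, q, K, k, hp', hk⟩ := E.pullback_deflation h f
  let e := hp'.isoIsPullback _ _ hp
  exact ⟨K, k ≫ e.hom, E.conflation_iso (Iso.refl _) e (Iso.refl _) hk (by simp) (by simp [e])⟩

lemma IsInflation.of_isPushout {A B C D : 𝒜} {i : A ⟶ B} {f : A ⟶ C} {f' : B ⟶ D} {i' : C ⟶ D}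
    (hi : IsInflation E i) (hp : IsPushout i f f' i') : IsInflation E i' := by
  obtain ⟨_, _, h⟩ := hi
  obtain ⟨P, p, j, Q, q, hp', hq⟩ := E.pushout_inflation h f
  let e := hp'.isoIsPushout _ _ hp
  exact ⟨Q, e.inv ≫ q, E.conflation_iso (Iso.refl _) e (Iso.refl _) hq (by simp [e]) (by simp)⟩

lemma IsDeflation.comp {A B C : 𝒜} {f : A ⟶ B} {g : B ⟶ C} (hf : IsDeflation E f)
    (hg : IsDeflation E g) : IsDeflation E (f ≫ g) :=
  have ⟨_, _, h₁⟩ := hf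
  have ⟨_, _, h₂⟩ := hg
  E.deflation_comp h₁ h₂

namespace ExactStructure.conflation

lemma of_isPullback {A B C B' C' : 𝒜} {i : A ⟶ B} {d : B ⟶ C} {f' : B' ⟶ B} {d' : B' ⟶ C'}
    {f : C' ⟶ C} (h : E.conflation i d) (hp : IsPullback f' d' d f) :
    ∃ i' : A ⟶ B', E.conflation i' d' ∧ i' ≫ f' = i := by
  have := h.mono
  obtain ⟨i', hf', hd'⟩ := hp.exists_lift i 0 (by simp [E.comp_zero h])
  have : Mono i' := mono_of_mono_fac hf'
  refine ⟨i', IsDeflation.conflation_of_exists_lift (.of_isPullback ⟨_, _, h⟩ hp) hd' ?_, hf'⟩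
  intro T x hx
  obtain ⟨y, hy⟩ := h.exists_lift (x ≫ f') (by rw [Category.assoc, hp.w, reassoc_of% hx, zero_comp])
  exact ⟨y, hp.hom_ext (by simp [hf', hy]) (by simp [hd', hx])⟩

lemma of_isPushout {A B C A' B' : 𝒜} {i : A ⟶ B} {d : B ⟶ C} {f : A ⟶ A'} {f' : B ⟶ B'}
    {i' : A' ⟶ B'} (h : E.conflation i d) (hp : IsPushout i f f' i') :
    ∃ d' : B' ⟶ C, E.conflation i' d' ∧ f' ≫ d' = d := by
  have := h.epi
  obtain ⟨d', hf', hi'⟩ := hp.exists_desc d 0 (by simp [E.comp_zero h])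
  have : Epi d' := epi_of_epi_fac hf'
  refine ⟨d', IsInflation.conflation_of_exists_desc (.of_isPushout ⟨_, _, h⟩ hp) hi' ?_, hf'⟩
  intro T x hx
  obtain ⟨y, hy⟩ := h.exists_desc (f' ≫ x) (by rw [hp.w_assoc, hx, Limits.comp_zero])
  exact ⟨y, hp.hom_ext (by simp [reassoc_of% hf', hy]) (by simp [reassoc_of% hi', hx])⟩

lemma exists_isPullback {A B C C' : 𝒜} {i : A ⟶ B} {d : B ⟶ C} (h : E.conflation i d)
    (f : C' ⟶ C) :
    ∃ (B' : 𝒜) (f' : B' ⟶ B) (d' : B' ⟶ C') (i' : A ⟶ B'),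
      IsPullback f' d' d f ∧ E.conflation i' d' ∧ i' ≫ f' = i :=
  have ⟨B', f', d', _, _, hp, _⟩ := E.pullback_deflation h f
  have ⟨i', h', hi'⟩ := h.of_isPullback hp
  ⟨B', f', d', i', hp, h', hi'⟩

lemma exists_isPushout {A B C A' : 𝒜} {i : A ⟶ B} {d : B ⟶ C} (h : E.conflation i d)
    (f : A ⟶ A') :
    ∃ (B' : 𝒜) (f' : B ⟶ B') (i' : A' ⟶ B') (d' : B' ⟶ C),
      IsPushout i f f' i' ∧ E.conflation i' d' ∧ f' ≫ d' = d :=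
  have ⟨B', f', i', _, _, hp, _⟩ := E.pushout_inflation h f
  have ⟨d', h', hd'⟩ := h.of_isPushout hp
  ⟨B', f', i', d', hp, h', hd'⟩

section Noether

variable {K₁ K₂ K A B C : 𝒜} {k₁ : K₁ ⟶ A} {d₁ : A ⟶ B} {k₂ : K₂ ⟶ B} {d₂ : B ⟶ C}
  {k : K ⟶ A}

lemma exists_conflation_kernels (h₁ : E.conflation k₁ d₁) (h₂ : E.conflation k₂ d₂)
    (h : E.conflation k (d₁ ≫ d₂)) :
    ∃ (a : K₁ ⟶ K) (b : K ⟶ K₂), E.conflation a b ∧ a ≫ k = k₁ ∧ k ≫ d₁ = b ≫ k₂ := by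
  have := h₂.mono
  have := h.mono
  obtain ⟨b, hb⟩ := h₂.exists_lift (k ≫ d₁) (by simp [E.comp_zero h])
  have hp : IsPullback k b d₁ k₂ := .mk' hb.symm
    (fun T φ φ' hφ _ ↦ by rwa [← cancel_mono k]) (fun T x y hxy ↦ by
      obtain ⟨z, hz⟩ := h.exists_lift x (by
        rw [reassoc_of% hxy, E.comp_zero h₂, Limits.comp_zero])
      exact ⟨z, hz, by rw [← cancel_mono k₂, Category.assoc, hb, reassoc_of% hz, hxy]⟩)
  obtain ⟨a, hab, ha⟩ := h₁.of_isPullback hp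
  exact ⟨a, b, hab, ha, hb.symm⟩

lemma exists_conflation_of_comp {N : 𝒜} {a : K₁ ⟶ K} {b : K ⟶ N} (h₁ : E.conflation k₁ d₁)
    (h : E.conflation k (d₁ ≫ d₂)) (hab : E.conflation a b) (ha : a ≫ k = k₁) :
    ∃ n : N ⟶ B, E.conflation n d₂ := by
  have := h₁.epi
  have := hab.epi
  obtain ⟨n, hn⟩ := hab.exists_desc (k ≫ d₁) (by rw [reassoc_of% ha, E.comp_zero h₁])
  have hp : IsPushout k b d₁ n := .mk' hn.symm
    (fun T φ φ' hφ _ ↦ by rwa [← cancel_epi d₁]) (fun T x y hxy ↦ by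
      obtain ⟨z, hz⟩ := h₁.exists_desc x (by
        rw [← ha, Category.assoc, hxy, reassoc_of% E.comp_zero hab, zero_comp])
      exact ⟨z, hz, by rw [← cancel_epi b, reassoc_of% hn, hz, hxy]⟩)
  obtain ⟨d, hd, hd₁⟩ := h.of_isPushout hp
  exact ⟨n, (cancel_epi d₁).1 hd₁ ▸ hd⟩

end Noether

/-! ### Split conflations -/

section Splitting

variable {A B C : 𝒜} {i : A ⟶ B} {d : B ⟶ C}

lemma exists_retraction_of_section (h : E.conflation i d) {s : C ⟶ B} (hs : s ≫ d = 𝟙 C) :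
    ∃ r : B ⟶ A, i ≫ r = 𝟙 A ∧ s ≫ r = 0 ∧ r ≫ i + d ≫ s = 𝟙 B := by
  have := h.mono
  obtain ⟨r, hr⟩ := h.exists_lift (𝟙 B - d ≫ s) (by simp [Preadditive.sub_comp, hs])
  refine ⟨r, ?_, ?_, by simp [hr]⟩
  · simp [← cancel_mono i, hr, Preadditive.comp_sub, reassoc_of% E.comp_zero h]
  · simp [← cancel_mono i, hr, Preadditive.comp_sub, reassoc_of% hs]

lemma exists_section_of_retraction (h : E.conflation i d) {r : B ⟶ A} (hr : i ≫ r = 𝟙 A) :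
    ∃ s : C ⟶ B, s ≫ d = 𝟙 C ∧ s ≫ r = 0 ∧ r ≫ i + d ≫ s = 𝟙 B := by
  have := h.epi
  obtain ⟨s, hs⟩ := h.exists_desc (𝟙 B - r ≫ i) (by simp [Preadditive.comp_sub, reassoc_of% hr])
  refine ⟨s, ?_, ?_, by simp [hs]⟩
  · simp [← cancel_epi d, reassoc_of% hs, Preadditive.sub_comp, E.comp_zero h]
  · simp [← cancel_epi d, reassoc_of% hs, Preadditive.sub_comp, hr]

end Splitting

end ExactStructure.conflation

lemma IsWIC.isInflation (hw : IsWIC E) {A B : 𝒜} (i : A ⟶ B) (r : B ⟶ A) (hi : i ≫ r = 𝟙 A) :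
    IsInflation E i := by
  obtain ⟨K, k, hk⟩ := hw r i hi
  obtain ⟨q, hkq, hiq, hsum⟩ := hk.exists_retraction_of_section hi
  have : Mono i := mono_of_mono_fac hi
  refine ⟨K, q, (hw q k hkq).conflation_of_exists_lift hiq fun x hx ↦ ⟨x ≫ r, ?_⟩⟩
  simpa [reassoc_of% hx] using x ≫= hsum

lemma IsWIC.conflation_inl_snd (hw : IsWIC E) (A B : 𝒜) :
    E.conflation (biprod.inl : A ⟶ A ⊞ B) biprod.snd :=
  (hw _ biprod.inr (by simp)).conflation_of_exists_lift (by simp) fun x hx ↦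
    ⟨x ≫ biprod.fst, by ext <;> simp [hx]⟩

lemma IsWIC.conflation_id_zero (hw : IsWIC E) (A : 𝒜) : E.conflation (𝟙 A) (0 : A ⟶ (0 : 𝒜)) :=
  (hw 0 0 (by simp)).conflation_of_exists_lift (by simp) fun x _ ↦ ⟨x, by simp⟩

/-! ### Weakly idempotent complete exact categories -/

/-- **Heller's cancellation law.** -/
lemma IsDeflation.of_comp (hw : IsWIC E) {A B C : 𝒜} {g : A ⟶ B} {f : B ⟶ C}
    (h : IsDeflation E (g ≫ f)) : IsDeflation E f := by
  obtain ⟨K, k, hk⟩ := h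
  obtain ⟨P, p₂, p₁, k₁, hp, hk₁, hk₁₂⟩ := hk.exists_isPullback f
  obtain ⟨σ, hσ₂, -⟩ := hp.exists_lift (𝟙 A) g (by simp)
  obtain ⟨N, n, hn⟩ : IsDeflation E (p₁ ≫ f) := by
    rw [← hp.w]
    exact .comp (hw p₂ σ hσ₂) ⟨K, k, hk⟩
  have := hk.mono
  obtain ⟨a, ha⟩ := hn.exists_lift k₁ (by rw [reassoc_of% E.comp_zero hk₁, zero_comp])
  obtain ⟨r, hr⟩ := hk.exists_lift (n ≫ p₂) (by rw [Category.assoc, hp.w, E.comp_zero hn])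
  have har : a ≫ r = 𝟙 K := by simp [← cancel_mono k, hr, reassoc_of% ha, hk₁₂]
  obtain ⟨Q, b, hab⟩ := hw.isInflation a r har
  obtain ⟨m, hm⟩ := hk₁.exists_conflation_of_comp hn hab ha
  exact ⟨Q, m, hm⟩

lemma IsDeflation.of_isPushout (hw : IsWIC E) {A B C D : 𝒜} {j : A ⟶ B} {p : A ⟶ C} {p' : B ⟶ D}
    {j' : C ⟶ D} (hp : IsDeflation E p) (hj : IsInflation E j) (h : IsPushout j p p' j') :
    IsDeflation E p' := by
  obtain ⟨_, q, hq⟩ := hj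
  obtain ⟨q', hq', hpq⟩ := hq.of_isPushout h
  obtain ⟨P, p₁, p₂, _, hP, hp₂, -⟩ := hq.exists_isPullback q'
  obtain ⟨y, hy⟩ := hq'.exists_lift (p₂ - p₁ ≫ p') (by simp [Preadditive.sub_comp, hpq, hP.w])
  obtain ⟨_, _, hc⟩ := hp
  obtain ⟨Q, x, s, _, hQ, hs, -⟩ := hc.exists_isPullback y
  have hfac : (s ≫ p₁ + x ≫ j) ≫ p' = s ≫ p₂ := by
    simp [h.w, hQ.w_assoc, hy, Preadditive.comp_sub]
  have hcomp : IsDeflation E (s ≫ p₂) := .comp ⟨_, _, hs⟩ ⟨_, _, hp₂⟩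
  exact .of_comp hw (hfac ▸ hcomp)

lemma ExactStructure.conflation.exists_comp (hw : IsWIC E) {A B C A' C' : 𝒜} {i : A ⟶ B}
    {p : B ⟶ A'} {j : B ⟶ C} {q : C ⟶ C'} (hi : E.conflation i p) (hj : E.conflation j q) :
    ∃ (D : 𝒜) (p' : C ⟶ D) (j' : A' ⟶ D) (q' : D ⟶ C'),
      E.conflation (i ≫ j) p' ∧ E.conflation j' q' ∧ j ≫ p' = p ≫ j' ∧ p' ≫ q' = q := by
  have := hi.mono
  have := hj.mono
  obtain ⟨D, p', j', q', hD, hj', hpq⟩ := hj.exists_isPushout p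
  have := hj'.mono
  have hp' : IsDeflation E p' := .of_isPushout hw ⟨_, _, hi⟩ ⟨_, _, hj⟩ hD
  refine ⟨D, p', j', q', hp'.conflation_of_exists_lift ?_ fun x hx ↦ ?_, hj', hD.w, hpq⟩
  · rw [Category.assoc, hD.w, reassoc_of% E.comp_zero hi, zero_comp]
  · obtain ⟨y, rfl⟩ := hj.exists_lift x (by rw [← hpq, reassoc_of% hx, zero_comp])
    obtain ⟨z, rfl⟩ := hi.exists_lift y (by
      rw [← cancel_mono j', Category.assoc, ← hD.w, ← Category.assoc, hx, zero_comp])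
    exact ⟨z, by simp⟩

lemma IsInflation.comp (hw : IsWIC E) {A B C : 𝒜} {i : A ⟶ B} {j : B ⟶ C}
    (hi : IsInflation E i) (hj : IsInflation E j) : IsInflation E (i ≫ j) := by
  obtain ⟨_, _, hi⟩ := hi
  obtain ⟨_, _, hj⟩ := hj
  obtain ⟨D, p, _, _, h, -⟩ := hi.exists_comp hw hj
  exact ⟨D, p, h⟩

lemma IsInflation.of_comp_of_isInflation (hw : IsWIC E) {A B C : 𝒜} {g : A ⟶ B} {f : B ⟶ C}
    (h : IsInflation E (g ≫ f)) (hf : IsInflation E f) : IsInflation E g := by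
  obtain ⟨_, n, hn⟩ := h
  obtain ⟨_, π, hπ⟩ := hf
  obtain ⟨r, hr⟩ := hn.exists_desc π (by rw [Category.assoc, E.comp_zero hπ, comp_zero])
  obtain ⟨_, _, hr'⟩ : IsDeflation E r := .of_comp hw ⟨_, _, hr ▸ hπ⟩
  obtain ⟨a, b, hab, ha, -⟩ := hn.exists_conflation_kernels hr' (hr ▸ hπ)
  have := hπ.mono
  obtain rfl : a = g := (cancel_mono f).1 ha
  exact ⟨_, b, hab⟩

section BiprodSquares

variable {𝒞 : Type*} [Category 𝒞] [HasZeroMorphisms 𝒞] [HasBinaryBiproducts 𝒞]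

lemma isPullback_biprod_map_id {A C : 𝒞} (f : A ⟶ C) (B : 𝒞) :
    IsPullback (biprod.fst : A ⊞ B ⟶ A) (biprod.map f (𝟙 B)) f (biprod.fst : C ⊞ B ⟶ C) :=
  .mk' (by simp) (fun T φ φ' h₁ h₂ ↦ by
    ext
    · exact h₁
    · simpa using h₂ =≫ biprod.snd) fun T a b h ↦
    ⟨biprod.lift a (b ≫ biprod.snd), by simp, by ext <;> simp [h]⟩

lemma isPushout_biprod_map_id {A C : 𝒞} (f : A ⟶ C) (B : 𝒞) :
    IsPushout f (biprod.inl : A ⟶ A ⊞ B) (biprod.inl : C ⟶ C ⊞ B) (biprod.map f (𝟙 B)) :=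
  .mk' (by simp) (fun T φ φ' h₁ h₂ ↦ by
    ext
    · exact h₁
    · simpa using biprod.inr ≫= h₂) fun T a b h ↦
    ⟨biprod.desc a (biprod.inr ≫ b), by simp, by ext <;> simp [h]⟩

end BiprodSquares

lemma IsInflation.of_comp (hw : IsWIC E) {A B C : 𝒜} {g : A ⟶ B} {f : B ⟶ C}
    (h : IsInflation E (g ≫ f)) : IsInflation E g := by
  have hmap : IsInflation E (biprod.map (g ≫ f) (𝟙 B)) :=
    h.of_isPushout (isPushout_biprod_map_id (g ≫ f) B)
  have hfac : biprod.lift (𝟙 A) g ≫ biprod.map (g ≫ f) (𝟙 B) = g ≫ biprod.lift f (𝟙 B) := by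
    ext <;> simp
  refine .of_comp_of_isInflation hw (f := biprod.lift f (𝟙 B)) ?_
    (hw.isInflation _ biprod.snd (by simp))
  exact hfac ▸ .comp hw (hw.isInflation _ biprod.fst (by simp)) hmap

/-! ### Vanishing of `Ext¹` -/

lemma ext1IsZero_iff_exists_section {A B : 𝒜} :
    Ext1IsZero E A B ↔ ∀ {M : 𝒜} (i : B ⟶ M) (d : M ⟶ A), E.conflation i d →
      ∃ s : A ⟶ M, s ≫ d = 𝟙 A where
  mp hE _ i d h :=
    have ⟨_, hr⟩ := hE i d h
    have ⟨s, hs, _⟩ := h.exists_section_of_retraction hr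
    ⟨s, hs⟩
  mpr hE _ i d h :=
    have ⟨_, hs⟩ := hE i d h
    have ⟨r, hr, _⟩ := h.exists_retraction_of_section hs
    ⟨r, hr⟩

namespace Ext1IsZero

lemma exists_extension {A B C K : 𝒜} (hE : Ext1IsZero E C K) {i : A ⟶ B} {q : B ⟶ C}
    (h : E.conflation i q) (f : A ⟶ K) : ∃ g : B ⟶ K, i ≫ g = f := by
  obtain ⟨D, f', i', q', hD, hc, -⟩ := h.exists_isPushout f
  obtain ⟨r, hr⟩ := hE i' q' hc
  exact ⟨f' ≫ r, by rw [hD.w_assoc, hr, Category.comp_id]⟩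

lemma exists_lift {C K M N : 𝒜} (hE : Ext1IsZero E C K) {k : K ⟶ M} {p : M ⟶ N}
    (h : E.conflation k p) (g : C ⟶ N) : ∃ s : C ⟶ M, s ≫ p = g := by
  obtain ⟨D, g', p', k', hD, hc, -⟩ := h.exists_isPullback g
  obtain ⟨s, hs⟩ := ext1IsZero_iff_exists_section.1 hE k' p' hc
  exact ⟨s ≫ g', by rw [Category.assoc, hD.w, reassoc_of% hs]⟩

/-- The partial section `l` over `A` amounts to a retraction of `K ⟶ p⁻¹(A)`, and
`Ext¹(C, K) = 0` extends this retraction to `M`. -/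
lemma exists_section_extending {A B C K M : 𝒜} (hE : Ext1IsZero E C K) {i : A ⟶ B} {q : B ⟶ C}
    (hi : E.conflation i q) {k : K ⟶ M} {p : M ⟶ B} (hk : E.conflation k p) {l : A ⟶ M}
    (hl : l ≫ p = i) : ∃ s : B ⟶ M, i ≫ s = l ∧ s ≫ p = 𝟙 B := by
  obtain ⟨N, n, hn⟩ := E.deflation_comp hk hi
  obtain ⟨κ, α, hκα, hκn, hnp⟩ := hk.exists_conflation_kernels hi hn
  obtain ⟨l', rfl⟩ := hn.exists_lift l (by rw [reassoc_of% hl, E.comp_zero hi])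
  have := hi.mono
  have hl' : l' ≫ α = 𝟙 A := by
    rw [← cancel_mono i, Category.assoc, ← hnp, ← Category.assoc, hl, Category.id_comp]
  obtain ⟨r, hr, hlr, -⟩ := hκα.exists_retraction_of_section hl'
  obtain ⟨ρ, rfl⟩ := hE.exists_extension hn r
  obtain ⟨s, hs, -, hsum⟩ := hk.exists_section_of_retraction
    (by rw [← hκn, Category.assoc, hr] : k ≫ ρ = 𝟙 K)
  refine ⟨s, ?_, hs⟩
  have := (l' ≫ n) ≫= hsum
  simpa [reassoc_of% hlr, reassoc_of% hl, hl] using this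

lemma exists_diagonal {A B C K M N : 𝒜} (hE : Ext1IsZero E C K) {i : A ⟶ B} {q : B ⟶ C}
    (hi : E.conflation i q) {k : K ⟶ M} {p : M ⟶ N} (hk : E.conflation k p) {a : A ⟶ M}
    {b : B ⟶ N} (hab : a ≫ p = i ≫ b) : ∃ s : B ⟶ M, i ≫ s = a ∧ s ≫ p = b := by
  obtain ⟨P, b', p', k', hP, hk', -⟩ := hk.exists_isPullback b
  obtain ⟨l, hl₁, hl₂⟩ := hP.exists_lift a i hab
  obtain ⟨s, hs₁, hs₂⟩ := hE.exists_section_extending hi hk' hl₂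
  exact ⟨s ≫ b', by rw [reassoc_of% hs₁, hl₁], by rw [Category.assoc, hP.w, reassoc_of% hs₂]⟩

lemma of_retract_right {A B B' : 𝒜} (hE : Ext1IsZero E A B) {i : B' ⟶ B} {r : B ⟶ B'}
    (hir : i ≫ r = 𝟙 B') : Ext1IsZero E A B' := fun j d h ↦ by
  obtain ⟨g, hg⟩ := hE.exists_extension h i
  exact ⟨g ≫ r, by rw [reassoc_of% hg, hir]⟩

lemma of_conflation_left {A B C D : 𝒜} {i : A ⟶ B} {d : B ⟶ C} (h : E.conflation i d)
    (hA : Ext1IsZero E A D) (hC : Ext1IsZero E C D) : Ext1IsZero E B D :=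
  ext1IsZero_iff_exists_section.2 fun _ p hp ↦ by
    obtain ⟨l, hl⟩ := hA.exists_lift hp i
    obtain ⟨s, -, hs⟩ := hC.exists_section_extending h hp hl
    exact ⟨s, hs⟩

lemma of_conflation_right {A B C D : 𝒜} {i : A ⟶ B} {d : B ⟶ C} (h : E.conflation i d)
    (hA : Ext1IsZero E D A) (hC : Ext1IsZero E D C) : Ext1IsZero E D B := fun j q hj ↦ by
  obtain ⟨g, hg⟩ := hC.exists_extension hj d
  obtain ⟨s, hs, -⟩ := hA.exists_diagonal hj h (a := 𝟙 B) (b := g) (by simp [hg])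
  exact ⟨s, hs⟩

end Ext1IsZero

/-! ### Cotorsion pairs -/

namespace AdditivelyClosed

variable {S : Set 𝒜} (hS : AdditivelyClosed S)

include hS

lemma biprod_mem {A B : 𝒜} (hA : A ∈ S) (hB : B ∈ S) : (A ⊞ B) ∈ S := hS.2.1 A B hA hB

lemma mem_of_retract {A B : 𝒜} {i : A ⟶ B} {r : B ⟶ A} (hir : i ≫ r = 𝟙 A) (hB : B ∈ S) :
    A ∈ S := hS.2.2.2 i r hir hB

end AdditivelyClosed

namespace IsCotorsionPair

variable {X Y : Set 𝒜} (hc : IsCotorsionPair E X Y)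

include hc

lemma ext1IsZero {A B : 𝒜} (hA : A ∈ X) (hB : B ∈ Y) : Ext1IsZero E A B := (hc.1 A).1 hA B hB

lemma left_of_conflation {A B C : 𝒜} {i : A ⟶ B} {d : B ⟶ C} (h : E.conflation i d)
    (hA : A ∈ X) (hC : C ∈ X) : B ∈ X :=
  (hc.1 B).2 fun _ hD ↦ Ext1IsZero.of_conflation_left h (hc.ext1IsZero hA hD) (hc.ext1IsZero hC hD)

lemma right_of_conflation {A B C : 𝒜} {i : A ⟶ B} {d : B ⟶ C} (h : E.conflation i d)
    (hA : A ∈ Y) (hC : C ∈ Y) : B ∈ Y :=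
  (hc.2 B).2 fun _ hD ↦ Ext1IsZero.of_conflation_right h (hc.ext1IsZero hD hA) (hc.ext1IsZero hD hC)

lemma right_of_retract {A B : 𝒜} {i : A ⟶ B} {r : B ⟶ A} (hir : i ≫ r = 𝟙 A) (hB : B ∈ Y) :
    A ∈ Y :=
  (hc.2 A).2 fun _ hD ↦ Ext1IsZero.of_retract_right (hc.ext1IsZero hD hB) hir

lemma left_of_kernel (hw : IsWIC E) (hcc : IsCompleteCP E X Y)
    (hY : ∀ {K A B : 𝒜} (i : K ⟶ A) (d : A ⟶ B), E.conflation i d → K ∈ Y → A ∈ Y → B ∈ Y)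
    {K A B : 𝒜} {i : K ⟶ A} {d : A ⟶ B} (h : E.conflation i d) (hA : A ∈ X) (hB : B ∈ X) :
    K ∈ X := by
  refine (hc.1 K).2 fun L hL ↦ ext1IsZero_iff_exists_section.2 fun {M} j p hjp ↦ ?_
  obtain ⟨W, _, w, _, hwq, -, hW⟩ := (hcc M).2
  obtain ⟨D, p', j', q', hD, hj', hpj, hpq⟩ := hjp.exists_comp hw hwq
  have := hj'.mono
  have hDY : D ∈ Y := hY _ _ hD hL hW
  obtain ⟨v, hv⟩ := Ext1IsZero.exists_extension (hc.ext1IsZero hB hDY) h j'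
  obtain ⟨u, rfl⟩ := Ext1IsZero.exists_lift (hc.ext1IsZero hA hL) hD v
  obtain ⟨s, hs⟩ := hwq.exists_lift (i ≫ u) (by
    rw [← hpq, ← Category.assoc, Category.assoc i, hv, E.comp_zero hj'])
  refine ⟨s, ?_⟩
  rw [← cancel_mono j', Category.assoc, ← hpj, reassoc_of% hs, hv, Category.id_comp]

lemma right_of_kernel (hcc : IsCompleteCP E X Y) (hP : X ∩ Y ⊆ {P | IsProjObj E P})
    {K A B : 𝒜} {i : K ⟶ A} {d : A ⟶ B} (h : E.conflation i d) (hA : A ∈ Y) (hB : B ∈ Y) :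
    K ∈ Y := by
  obtain ⟨W, X₁, w, q, hwq, hX₁, hW⟩ := (hcc K).2
  obtain ⟨Q, a, b, e, hQ, hbe, -⟩ := h.exists_isPushout w
  obtain ⟨c, hac, -⟩ := hwq.of_isPushout hQ.flip
  obtain ⟨s, hs⟩ := ext1IsZero_iff_exists_section.1 (hc.ext1IsZero hX₁ hA) a c hac
  have hX₁Y : X₁ ∈ Y := hc.right_of_retract hs (hc.right_of_conflation hbe hW hB)
  obtain ⟨σ, hσ⟩ := hP ⟨hX₁, hX₁Y⟩ q ⟨_, _, hwq⟩ (𝟙 X₁)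
  obtain ⟨r, hr, -⟩ := hwq.exists_retraction_of_section hσ
  exact hc.right_of_retract hr hW

theorem isThick_right_iff_isHereditaryCP (hw : IsWIC E) (hcc : IsCompleteCP E X Y)
    (hP : X ∩ Y ⊆ {P | IsProjObj E P}) : IsThick E Y ↔ IsHereditaryCP E X Y := by
  refine ⟨fun hY ↦ ?_, fun h ↦ ⟨fun i r hir hB ↦ hc.right_of_retract hir hB, fun i d hid ↦
    ⟨h.2 i d hid, hc.right_of_conflation hid, hc.right_of_kernel hcc hP hid⟩⟩⟩
  have hcoker {K A B : 𝒜} (i : K ⟶ A) (d : A ⟶ B) (h : E.conflation i d) :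
      K ∈ Y → A ∈ Y → B ∈ Y := (hY.2 i d h).1
  exact ⟨fun i d h ↦ hc.left_of_kernel hw hcc hcoker h, hcoker⟩

end IsCotorsionPair

lemma IsCompleteCP.isCotorsionPair {X Y : Set 𝒜} (hcc : IsCompleteCP E X Y)
    (hX : AdditivelyClosed X) (hY : AdditivelyClosed Y)
    (hE : ∀ A ∈ X, ∀ B ∈ Y, Ext1IsZero E A B) : IsCotorsionPair E X Y := by
  refine ⟨fun A ↦ ⟨hE A, fun hA ↦ ?_⟩, fun B ↦ ⟨fun hB A hA ↦ hE A hA B hB, fun hB ↦ ?_⟩⟩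
  · obtain ⟨Y₀, X₀, i, d, h, hX₀, hY₀⟩ := (hcc A).1
    obtain ⟨s, hs⟩ := ext1IsZero_iff_exists_section.1 (hA Y₀ hY₀) i d h
    exact hX.mem_of_retract hs hX₀
  · obtain ⟨Y₁, X₁, i, d, h, hX₁, hY₁⟩ := (hcc B).2
    obtain ⟨r, hr⟩ := hB X₁ hX₁ i d h
    exact hY.mem_of_retract hr hY₁

/-! ### Weak equivalences -/

/-- The class `𝒫` of projective objects of the exact category, in the role of `ω`. -/
abbrev ExactStructure.projectives (E : ExactStructure 𝒜) : Set 𝒜 := {P | IsProjObj E P}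

lemma IsProjObj.zero : IsProjObj E (0 : 𝒜) := fun _ _ _ ↦ ⟨0, (isZero_zero 𝒜).eq_of_src _ _⟩

lemma IsProjObj.of_retract {P Q : 𝒜} (hQ : IsProjObj E Q) {i : P ⟶ Q} {r : Q ⟶ P}
    (hir : i ≫ r = 𝟙 P) : IsProjObj E P := fun d hd g ↦ by
  obtain ⟨h, hh⟩ := hQ d hd (r ≫ g)
  exact ⟨i ≫ h, by rw [Category.assoc, hh, reassoc_of% hir]⟩

lemma IsProjObj.biprod {P Q : 𝒜} (hP : IsProjObj E P) (hQ : IsProjObj E Q) :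
    IsProjObj E (P ⊞ Q) := fun d hd g ↦ by
  obtain ⟨p, hp⟩ := hP d hd (biprod.inl ≫ g)
  obtain ⟨q, hq⟩ := hQ d hd (biprod.inr ≫ g)
  exact ⟨biprod.desc p q, by ext <;> simp [hp, hq]⟩

lemma IsDeflation.biprod_desc (hw : IsWIC E) {A B P : 𝒜} (f : A ⟶ B) {t : P ⟶ B}
    (ht : IsDeflation E t) : IsDeflation E (biprod.desc f t) :=
  .of_comp hw (g := biprod.inr) (by rwa [biprod.inr_desc])

lemma ExactStructure.conflation.exists_conflation_biprod_desc (hw : IsWIC E) {K A B W : 𝒜}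
    {k : K ⟶ A} {d : A ⟶ B} (h : E.conflation k d) (s : W ⟶ A) :
    ∃ k' : K ⊞ W ⟶ A ⊞ W, E.conflation k' (biprod.desc d (s ≫ d)) := by
  have := h.mono
  have hd : IsDeflation E (biprod.desc d (s ≫ d)) :=
    .of_comp hw (g := biprod.inl) (by rw [biprod.inl_desc]; exact ⟨K, k, h⟩)
  let k' : K ⊞ W ⟶ A ⊞ W := biprod.lift (biprod.desc k (-s)) biprod.snd
  have : Mono k' := Preadditive.mono_of_cancel_zero _ fun x hx ↦ by
    have hx₂ : x ≫ biprod.snd = 0 := by simpa [k'] using hx =≫ biprod.snd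
    have hx₁ : x ≫ biprod.fst ≫ k = 0 := by
      simpa [k', biprod.desc_eq, reassoc_of% hx₂] using hx =≫ biprod.fst
    ext
    · simpa [← cancel_mono k] using hx₁
    · simpa using hx₂
  refine ⟨k', hd.conflation_of_exists_lift (by ext <;> simp [k', E.comp_zero h]) fun x hx ↦ ?_⟩
  obtain ⟨y, hy⟩ := h.exists_lift (x ≫ biprod.fst + x ≫ biprod.snd ≫ s) (by
    simpa [biprod.desc_eq] using hx)
  exact ⟨biprod.lift y (x ≫ biprod.snd), by ext <;> simp [k', biprod.desc_eq, hy]⟩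

lemma ExactStructure.conflation.biprod_desc_zero (hw : IsWIC E) {K A B : 𝒜} {k : K ⟶ A}
    {d : A ⟶ B} (h : E.conflation k d) :
    E.conflation (k ≫ biprod.inl) (biprod.desc d (0 : (0 : 𝒜) ⟶ B)) := by
  have := h.mono
  have hd : IsDeflation E (biprod.desc d (0 : (0 : 𝒜) ⟶ B)) :=
    .of_comp hw (g := biprod.inl) (by rw [biprod.inl_desc]; exact ⟨K, k, h⟩)
  refine hd.conflation_of_exists_lift (by simp [E.comp_zero h]) fun x hx ↦ ?_
  obtain ⟨y, hy⟩ := h.exists_lift (x ≫ biprod.fst) (by simpa [biprod.desc_eq] using hx)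
  exact ⟨y, by ext; simp [reassoc_of% hy]⟩

lemma IsRetractMor.exists_kernel_retract {K M B K' M' B' : 𝒜} {k : K ⟶ M} {d : M ⟶ B}
    {k' : K' ⟶ M'} {d' : M' ⟶ B'} (hr : IsRetractMor d d') (h : E.conflation k d)
    (h' : E.conflation k' d') : ∃ (i : K ⟶ K') (r : K' ⟶ K), i ≫ r = 𝟙 K := by
  obtain ⟨φ, ψ, φ', ψ', hφψ, -, hφ, hψ⟩ := hr
  have := h.mono
  obtain ⟨i, hi⟩ := h'.exists_lift (k ≫ φ) (by
    rw [Category.assoc, hφ, reassoc_of% E.comp_zero h, zero_comp])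
  obtain ⟨r, hr⟩ := h.exists_lift (k' ≫ ψ) (by
    rw [Category.assoc, ← hψ, reassoc_of% E.comp_zero h', zero_comp])
  exact ⟨i, r, by rw [← cancel_mono k, Category.assoc, hr, reassoc_of% hi, hφψ]; simp⟩

/-- The kernel of `(g, u)` is a retract of the kernel of `(f, t, u ≫ φ₂) : (A ⊞ P) ⊞ Q ⟶ B`, where
`φ₂` embeds the target of `g` in that of `f`; since `Q` is projective, the latter is
`ker (f, t) ⊞ Q`. -/
lemma kernel_mem_of_isRetractMor (hw : IsWIC E) {Y : Set 𝒜} (hY : AdditivelyClosed Y)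
    (hPY : E.projectives ⊆ Y) {A B A' B' Q L : 𝒜} {f : A ⟶ B} {g : A' ⟶ B'}
    (hgf : IsRetractMor g f) (hf : WeqO E E.projectives Y f) (hQ : IsProjObj E Q) {u : Q ⟶ B'}
    {l : L ⟶ A' ⊞ Q} (hl : E.conflation l (biprod.desc g u)) : L ∈ Y := by
  obtain ⟨P, hP, t, K, k, hk, hK⟩ := hf
  obtain ⟨φ₁, ψ₁, φ₂, ψ₂, hφψ₁, hφψ₂, hφ, hψ⟩ := hgf
  obtain ⟨s, hs⟩ := hQ _ ⟨_, _, hk⟩ (u ≫ φ₂)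
  obtain ⟨σ, hσ⟩ := hP _ ⟨_, _, hl⟩ (t ≫ ψ₂)
  obtain ⟨m, hm⟩ := hk.exists_conflation_biprod_desc hw s
  have hr : IsRetractMor (biprod.desc g u)
      (biprod.desc (biprod.desc f t) (s ≫ biprod.desc f t)) := by
    refine ⟨biprod.map (φ₁ ≫ biprod.inl) (𝟙 Q),
      biprod.desc (biprod.desc (ψ₁ ≫ biprod.inl) σ) biprod.inr, φ₂, ψ₂, ?_, hφψ₂, ?_, ?_⟩
    · ext <;> simp [reassoc_of% hφψ₁]
    · ext <;> simp [hφ, hs]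
    · ext <;> simp [hψ, hσ, hs, hφψ₂]
  obtain ⟨i, r, hir⟩ := hr.exists_kernel_retract hl hm
  exact hY.mem_of_retract hir (hY.biprod_mem hK (hPY hQ))

section Weq

variable (hw : IsWIC E) {Y : Set 𝒜} (hY : AdditivelyClosed Y) (hPY : E.projectives ⊆ Y)

include hw hY hPY

lemma weqO_iff_of_conflation_desc {A B P K : 𝒜} {f : A ⟶ B} (hP : IsProjObj E P) {t : P ⟶ B}
    {k : K ⟶ A ⊞ P} (h : E.conflation k (biprod.desc f t)) :
    WeqO E E.projectives Y f ↔ K ∈ Y :=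
  ⟨fun hf ↦ kernel_mem_of_isRetractMor hw hY hPY ⟨𝟙 A, 𝟙 A, 𝟙 B, 𝟙 B, by simp⟩ hf hP h,
    fun hK ↦ ⟨P, hP, t, K, k, h, hK⟩⟩

lemma weqO_iff_of_conflation {A B K : 𝒜} {k : K ⟶ A} {d : A ⟶ B} (h : E.conflation k d) :
    WeqO E E.projectives Y d ↔ K ∈ Y :=
  weqO_iff_of_conflation_desc hw hY hPY IsProjObj.zero (h.biprod_desc_zero hw)

end Weq

lemma HasEnoughProj.exists_conflation_desc (he : HasEnoughProj E) (hw : IsWIC E) {A B : 𝒜}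
    (f : A ⟶ B) : ∃ (P : 𝒜) (t : P ⟶ B) (K : 𝒜) (k : K ⟶ A ⊞ P),
      IsProjObj E P ∧ E.conflation k (biprod.desc f t) := by
  obtain ⟨P, t, hP, ht⟩ := he B
  obtain ⟨K, k, hk⟩ := IsDeflation.biprod_desc hw f ht
  exact ⟨P, t, K, k, hP, hk⟩

lemma WeqO.of_isRetractMor (hw : IsWIC E) (he : HasEnoughProj E) {Y : Set 𝒜}
    (hY : AdditivelyClosed Y) (hPY : E.projectives ⊆ Y) {A B A' B' : 𝒜} {f : A ⟶ B} {g : A' ⟶ B'}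
    (hf : WeqO E E.projectives Y f) (hgf : IsRetractMor g f) : WeqO E E.projectives Y g := by
  obtain ⟨Q, u, L, l, hQ, hl⟩ := he.exists_conflation_desc hw g
  exact ⟨Q, hQ, u, L, l, hl, kernel_mem_of_isRetractMor hw hY hPY hgf hf hQ hl⟩

lemma exists_conflation_kernels_desc {A B C P Q K₁ K₂ : 𝒜} {f : A ⟶ B} {g : B ⟶ C} {t : P ⟶ B}
    {u : Q ⟶ C} {k₁ : K₁ ⟶ A ⊞ P} {k₂ : K₂ ⟶ B ⊞ Q} (h₁ : E.conflation k₁ (biprod.desc f t))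
    (h₂ : E.conflation k₂ (biprod.desc g u)) :
    ∃ (K : 𝒜) (k : K ⟶ A ⊞ (P ⊞ Q)) (a : K₁ ⟶ K) (b : K ⟶ K₂),
      E.conflation k (biprod.desc (f ≫ g) (biprod.desc (t ≫ g) u)) ∧ E.conflation a b := by
  obtain ⟨_, hmap, -⟩ := h₁.of_isPullback (isPullback_biprod_map_id (biprod.desc f t) Q)
  obtain ⟨K, k, hk⟩ := E.deflation_comp hmap h₂
  obtain ⟨a, b, hab, -⟩ := hmap.exists_conflation_kernels h₂ hk
  refine ⟨K, k ≫ (biprod.associator A P Q).hom, a, b, ?_, hab⟩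
  exact E.conflation_iso (Iso.refl K) (biprod.associator A P Q) (Iso.refl C) hk (by simp)
    (by ext <;> simp)

lemma exists_conflation_weqO_iff (hw : IsWIC E) (he : HasEnoughProj E) {Y : Set 𝒜}
    (hY : AdditivelyClosed Y) (hPY : E.projectives ⊆ Y) {A B C : 𝒜} (f : A ⟶ B) (g : B ⟶ C) :
    ∃ (K₁ K K₂ : 𝒜) (a : K₁ ⟶ K) (b : K ⟶ K₂), E.conflation a b ∧
      (WeqO E E.projectives Y f ↔ K₁ ∈ Y) ∧ (WeqO E E.projectives Y (f ≫ g) ↔ K ∈ Y) ∧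
      (WeqO E E.projectives Y g ↔ K₂ ∈ Y) := by
  obtain ⟨P, t, K₁, k₁, hP, h₁⟩ := he.exists_conflation_desc hw f
  obtain ⟨Q, u, K₂, k₂, hQ, h₂⟩ := he.exists_conflation_desc hw g
  obtain ⟨K, k, a, b, h, hab⟩ := exists_conflation_kernels_desc h₁ h₂
  exact ⟨K₁, K, K₂, a, b, hab, weqO_iff_of_conflation_desc hw hY hPY hP h₁,
    weqO_iff_of_conflation_desc hw hY hPY (IsProjObj.biprod hP hQ) h,
    weqO_iff_of_conflation_desc hw hY hPY hQ h₂⟩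

lemma hasTwoOutOfThreeProperty_weqO (hw : IsWIC E) (he : HasEnoughProj E) {Y : Set 𝒜}
    (hY : AdditivelyClosed Y) (hPY : E.projectives ⊆ Y) (hT : IsThick E Y) :
    (WeqO E E.projectives Y).HasTwoOutOfThreeProperty where
  comp_mem f g hf hg := by
    obtain ⟨_, _, _, a, b, hab, hf', hfg', hg'⟩ := exists_conflation_weqO_iff hw he hY hPY f g
    exact hfg'.2 ((hT.2 a b hab).2.1 (hf'.1 hf) (hg'.1 hg))
  of_precomp f g hf hfg := by
    obtain ⟨_, _, _, a, b, hab, hf', hfg', hg'⟩ := exists_conflation_weqO_iff hw he hY hPY f g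
    exact hg'.2 ((hT.2 a b hab).1 (hf'.1 hf) (hfg'.1 hfg))
  of_postcomp f g hg hfg := by
    obtain ⟨_, _, _, a, b, hab, hf', hfg', hg'⟩ := exists_conflation_weqO_iff hw he hY hPY f g
    exact hf'.2 ((hT.2 a b hab).2.2 (hfg'.1 hfg) (hg'.1 hg))

/-! ### Cofibrations and fibrations -/

lemma CoFibO.comp (hw : IsWIC E) {X Y : Set 𝒜} (hc : IsCotorsionPair E X Y) {A B C : 𝒜}
    {i : A ⟶ B} {j : B ⟶ C} (hi : CoFibO E X i) (hj : CoFibO E X j) : CoFibO E X (i ≫ j) := by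
  obtain ⟨_, p, hip, hp⟩ := hi
  obtain ⟨_, q, hjq, hq⟩ := hj
  obtain ⟨D, p', _, _, h, hD, -⟩ := hip.exists_comp hw hjq
  exact ⟨D, p', h, hc.left_of_conflation hD hp hq⟩

lemma CoFibO.of_isRetractMor (hw : IsWIC E) {X : Set 𝒜} (hX : AdditivelyClosed X)
    {A B A' B' : 𝒜} {f : A ⟶ B} {g : A' ⟶ B'} (hf : CoFibO E X f) (hgf : IsRetractMor g f) :
    CoFibO E X g := by
  obtain ⟨Z, d, h, hZ⟩ := hf
  obtain ⟨φ, ψ, φ', ψ', hφψ, hφψ', hφ, hψ⟩ := hgf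
  obtain ⟨Z', d', h'⟩ : IsInflation E g := .of_comp hw (f := φ')
    (hφ ▸ .comp hw (hw.isInflation φ ψ hφψ) ⟨Z, d, h⟩)
  obtain ⟨a, ha⟩ := h'.exists_desc (φ' ≫ d) (by
    rw [← reassoc_of% hφ, E.comp_zero h, comp_zero])
  obtain ⟨b, hb⟩ := h.exists_desc (ψ' ≫ d') (by
    rw [reassoc_of% hψ, E.comp_zero h', comp_zero])
  have := h'.epi
  refine ⟨Z', d', h', hX.mem_of_retract (i := a) (r := b) ?_ hZ⟩
  rw [← cancel_epi d', reassoc_of% ha, hb, reassoc_of% hφψ', Category.comp_id]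

lemma FibO.of_isRetractMor {𝒞 : Type*} [Category 𝒞] {ω : Set 𝒞} {A B A' B' : 𝒞} {f : A ⟶ B}
    {g : A' ⟶ B'} (hf : FibO ω f) (hgf : IsRetractMor g f) : FibO ω g := fun W hW w ↦ by
  obtain ⟨φ, ψ, φ', ψ', -, hφψ', -, hψ⟩ := hgf
  obtain ⟨h, hh⟩ := hf W hW (w ≫ φ')
  exact ⟨h ≫ ψ, by rw [Category.assoc, ← hψ, reassoc_of% hh, hφψ', Category.comp_id]⟩

lemma fibrant_fibO {𝒞 : Type*} [Category 𝒞] [Preadditive 𝒞] [HasZeroObject 𝒞] (ω : Set 𝒞)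
    (A : 𝒞) : Fibrant (FibO ω) A :=
  fun _ _ _ ↦ ⟨0, (isZero_zero 𝒞).eq_of_tgt _ _⟩

lemma cofibrant_coFibO_iff {X : Set 𝒜} (hX : AdditivelyClosed X) {A : 𝒜} :
    Cofibrant (CoFibO E X) A ↔ A ∈ X := by
  refine ⟨fun ⟨Z, d, h, hZ⟩ ↦ ?_, fun hA ↦ ⟨A, 𝟙 A, E.id_deflation A, hA⟩⟩
  obtain ⟨r, hr⟩ := h.exists_desc (𝟙 A) (by simp)
  exact hX.mem_of_retract hr hZ

lemma fibO_projectives_iff (hw : IsWIC E) (he : HasEnoughProj E) {A B : 𝒜} {f : A ⟶ B} :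
    FibO E.projectives f ↔ IsDeflation E f := by
  refine ⟨fun hf ↦ ?_, fun hf P hP g ↦ hP f hf g⟩
  obtain ⟨P, t, hP, ht⟩ := he B
  obtain ⟨h, rfl⟩ := hf P hP t
  exact .of_comp hw ht

lemma fibO_and_weqO_iff (hw : IsWIC E) (he : HasEnoughProj E) {Y : Set 𝒜} (hY : AdditivelyClosed Y)
    (hPY : E.projectives ⊆ Y) {A B : 𝒜} {p : A ⟶ B} :
    FibO E.projectives p ∧ WeqO E E.projectives Y p ↔ TFibO E Y p where
  mp := fun ⟨hp, hW⟩ ↦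
    have ⟨K, k, hk⟩ := (fibO_projectives_iff hw he).1 hp
    ⟨K, k, hk, (weqO_iff_of_conflation hw hY hPY hk).1 hW⟩
  mpr := fun ⟨K, k, hk, hK⟩ ↦
    ⟨(fibO_projectives_iff hw he).2 ⟨K, k, hk⟩, (weqO_iff_of_conflation hw hY hPY hk).2 hK⟩

lemma CoFibO.tCoFibO_of_weqO {X Y : Set 𝒜} (hc : IsCotorsionPair E X Y) {A B : 𝒜} {f : A ⟶ B}
    (hf : CoFibO E X f) (hW : WeqO E E.projectives Y f) : TCoFibO E E.projectives f := by
  obtain ⟨C, d, hd, hC⟩ := hf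
  obtain ⟨P, hP, t, K, k, hk, hK⟩ := hW
  obtain ⟨s, hfs, hs⟩ := Ext1IsZero.exists_section_extending (hc.ext1IsZero hC hK) hd hk
    (l := biprod.inl) (biprod.inl_desc f t)
  obtain ⟨c, hdc⟩ := hd.exists_desc (s ≫ biprod.snd) (by rw [reassoc_of% hfs, biprod.inl_snd])
  have := hd.epi
  have hct : c ≫ t ≫ d = 𝟙 C := by
    rw [← cancel_epi d, reassoc_of% hdc]
    simpa [biprod.desc_eq, Preadditive.add_comp, E.comp_zero hd] using hs =≫ d
  exact ⟨⟨s ≫ biprod.fst, by rw [reassoc_of% hfs, biprod.inl_fst]⟩,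
    C, d, hd, IsProjObj.of_retract hP hct⟩

lemma CoFibO.exists_diagonal {X Y : Set 𝒜} (hc : IsCotorsionPair E X Y) {A B M N : 𝒜} {i : A ⟶ B}
    {p : M ⟶ N} (hi : CoFibO E X i) (hp : TFibO E Y p) {a : A ⟶ M} {b : B ⟶ N}
    (hab : a ≫ p = i ≫ b) : ∃ s : B ⟶ M, i ≫ s = a ∧ s ≫ p = b := by
  obtain ⟨C, q, hq, hC⟩ := hi
  obtain ⟨K, k, hk, hK⟩ := hp
  exact Ext1IsZero.exists_diagonal (hc.ext1IsZero hC hK) hq hk hab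

lemma TCoFibO.exists_diagonal {ω : Set 𝒜} {A B M N : 𝒜} {i : A ⟶ B} {p : M ⟶ N}
    (hi : TCoFibO E ω i) (hp : FibO ω p) {a : A ⟶ M} {b : B ⟶ N} (hab : a ≫ p = i ≫ b) :
    ∃ s : B ⟶ M, i ≫ s = a ∧ s ≫ p = b := by
  obtain ⟨⟨r, hr⟩, C, d, hd, hC⟩ := hi
  obtain ⟨σ, -, -, hsum⟩ := hd.exists_section_of_retraction hr
  obtain ⟨u, hu⟩ := hp C hC (σ ≫ b)
  refine ⟨r ≫ a + d ≫ u, ?_, ?_⟩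
  · simp [reassoc_of% hr, reassoc_of% E.comp_zero hd]
  · simpa [hab, hu] using hsum =≫ b

lemma weqO_inl {ω Y : Set 𝒜} (h0 : (0 : 𝒜) ∈ Y) (A : 𝒜) {W : 𝒜} (hW : W ∈ ω) :
    WeqO E ω Y (biprod.inl : A ⟶ A ⊞ W) :=
  ⟨W, hW, biprod.inr, 0, 0, by
    rw [show biprod.desc (biprod.inl : A ⟶ A ⊞ W) biprod.inr = 𝟙 _ by ext <;> simp]
    exact E.id_deflation _, h0⟩

/-! ### The model structure of a cotorsion pair -/

lemma HasEnoughProj.exists_fact_weqO (he : HasEnoughProj E) (hw : IsWIC E) {X Y : Set 𝒜}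
    (hPX : E.projectives ⊆ X) (h0 : (0 : 𝒜) ∈ Y) {A B : 𝒜} (f : A ⟶ B) :
    ∃ (Z : 𝒜) (i : A ⟶ Z) (p : Z ⟶ B), i ≫ p = f ∧ CoFibO E X i ∧ WeqO E E.projectives Y i ∧
      IsDeflation E p := by
  obtain ⟨P, t, K, k, hP, hk⟩ := he.exists_conflation_desc hw f
  exact ⟨A ⊞ P, biprod.inl, biprod.desc f t, biprod.inl_desc _ _,
    ⟨P, biprod.snd, hw.conflation_inl_snd A P, hPX hP⟩, weqO_inl h0 A hP, K, k, hk⟩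

lemma HasEnoughProj.exists_fact_tFibO (he : HasEnoughProj E) (hw : IsWIC E) {X Y : Set 𝒜}
    (hc : IsCotorsionPair E X Y) (hcc : IsCompleteCP E X Y) (hPX : E.projectives ⊆ X) {A B : 𝒜}
    (f : A ⟶ B) :
    ∃ (Z : 𝒜) (j : A ⟶ Z) (q : Z ⟶ B), j ≫ q = f ∧ CoFibO E X j ∧ TFibO E Y q := by
  obtain ⟨P, t, K, k, hP, hk⟩ := he.exists_conflation_desc hw f
  obtain ⟨W, X₁, w, c, hwc, hX₁, hW⟩ := (hcc K).2
  obtain ⟨M, w', k', q, hM, hk'q, hwq⟩ := hk.exists_isPushout w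
  obtain ⟨c', hc', -⟩ := hwc.of_isPushout hM.flip
  exact ⟨M, biprod.inl ≫ w', q, by rw [Category.assoc, hwq, biprod.inl_desc],
    .comp hw hc ⟨P, biprod.snd, hw.conflation_inl_snd A P, hPX hP⟩ ⟨X₁, c', hc', hX₁⟩,
    W, k', hk'q, hW⟩

theorem IsCotorsionPair.isExactModelStr {X Y : Set 𝒜} (hc : IsCotorsionPair E X Y)
    (hw : IsWIC E) (he : HasEnoughProj E) (hcc : IsCompleteCP E X Y) (hX : AdditivelyClosed X)
    (hY : AdditivelyClosed Y) (hT : IsThick E Y) (hPX : E.projectives ⊆ X)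
    (hPY : E.projectives ⊆ Y) :
    IsExactModelStr E (CoFibO E X) (FibO E.projectives) (WeqO E E.projectives Y) := by
  have hdefl {A B : 𝒜} (f : A ⟶ B) : FibO E.projectives f ↔ IsDeflation E f :=
    fibO_projectives_iff hw he
  have htriv {A B : 𝒜} (p : A ⟶ B) :
      FibO E.projectives p ∧ WeqO E E.projectives Y p ↔ TFibO E Y p :=
    fibO_and_weqO_iff hw he hY hPY
  have := hasTwoOutOfThreeProperty_weqO hw he hY hPY hT
  refine ⟨?_, fun f ↦ by simp only [cofibrant_coFibO_iff hX, CoFibO],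
    fun f ↦ by simp only [hdefl, fibrant_fibO, and_true, IsDeflation]⟩
  exact
    { weq_comp := MorphismProperty.comp_mem _
      weq_cancel_left := MorphismProperty.of_precomp _
      weq_cancel_right := MorphismProperty.of_postcomp _
      retract_cofib := fun _ _ h hf ↦ hf.of_isRetractMor hw hX h
      retract_fib := fun _ _ h hf ↦ hf.of_isRetractMor h
      retract_weq := fun _ _ h hf ↦ hf.of_isRetractMor hw he hY hPY h
      lifting_left := fun _ _ _ _ hi hW hp ↦ (hi.tCoFibO_of_weqO hc hW).exists_diagonal hp
      lifting_right := fun _ p _ _ hi hp hW ↦ hi.exists_diagonal hc ((htriv p).1 ⟨hp, hW⟩)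
      fact_left := fun f ↦ by simpa only [hdefl] using he.exists_fact_weqO hw hPX hY.1 f
      fact_right := fun f ↦ by simpa only [htriv] using he.exists_fact_tFibO hw hc hcc hPX f }

/-! ### The cotorsion pair of a model structure -/

lemma IsExactModelStr.fibO_iff_isDeflation {C W : MorphismProperty 𝒜} {ω : Set 𝒜}
    (hM : IsExactModelStr E C (FibO ω) W) {A B : 𝒜} {f : A ⟶ B} : FibO ω f ↔ IsDeflation E f := by
  simp only [hM.2.2 f, fibrant_fibO, and_true, IsDeflation]

lemma IsExactModelStr.subset_projectives {C W : MorphismProperty 𝒜} {ω : Set 𝒜}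
    (hM : IsExactModelStr E C (FibO ω) W) : ω ⊆ E.projectives :=
  fun P hP _ _ _ hd g ↦ hM.fibO_iff_isDeflation.2 hd P hP g

lemma IsExactModelStr.exists_deflation (hw : IsWIC E) {X Y ω : Set 𝒜}
    (hM : IsExactModelStr E (CoFibO E X) (FibO ω) (WeqO E ω Y)) (B : 𝒜) :
    ∃ (W : 𝒜) (d : W ⟶ B), W ∈ ω ∧ IsDeflation E d := by
  obtain ⟨Z, i, p, -, -, ⟨W, hW, t, K, k, hk, -⟩, hp⟩ := hM.1.fact_left (0 : (0 : 𝒜) ⟶ B)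
  have ht : IsDeflation E t := .of_comp hw (g := biprod.snd) <| by
    have hdesc : biprod.desc i t = biprod.snd ≫ t := by ext; simp
    exact ⟨K, k, hdesc ▸ hk⟩
  exact ⟨W, t ≫ p, hW, ht.comp (hM.fibO_iff_isDeflation.1 hp)⟩

lemma IsExactModelStr.hasEnoughProj (hw : IsWIC E) {X Y ω : Set 𝒜}
    (hM : IsExactModelStr E (CoFibO E X) (FibO ω) (WeqO E ω Y)) : HasEnoughProj E := fun B ↦
  have ⟨W, d, hW, hd⟩ := hM.exists_deflation hw B
  ⟨W, d, hM.subset_projectives hW, hd⟩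

lemma IsExactModelStr.inter_eq_projectives (hw : IsWIC E) {X Y : Set 𝒜} (hX : AdditivelyClosed X)
    (hY : AdditivelyClosed Y)
    (hM : IsExactModelStr E (CoFibO E X) (FibO (X ∩ Y)) (WeqO E (X ∩ Y) Y)) :
    X ∩ Y = E.projectives := by
  refine hM.subset_projectives.antisymm fun P hP ↦ ?_
  obtain ⟨W, d, hW, hd⟩ := hM.exists_deflation hw P
  obtain ⟨s, hs⟩ := hP d hd (𝟙 P)
  exact ⟨hX.mem_of_retract hs hW.1, hY.mem_of_retract hs hW.2⟩

namespace IsModelStructure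

variable {X Y : Set 𝒜} (hM : IsModelStructure (CoFibO E X) (FibO E.projectives)
  (WeqO E E.projectives Y)) (hw : IsWIC E) (hY : AdditivelyClosed Y) (hPY : E.projectives ⊆ Y)

include hM hw hY hPY

lemma right_of_cokernel {A B C : 𝒜} {i : A ⟶ B} {d : B ⟶ C} (h : E.conflation i d)
    (hA : A ∈ Y) (hB : B ∈ Y) : C ∈ Y := by
  have hd : WeqO E E.projectives Y d := (weqO_iff_of_conflation hw hY hPY h).2 hA
  have hzero (D : 𝒜) : WeqO E E.projectives Y (0 : D ⟶ (0 : 𝒜)) ↔ D ∈ Y :=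
    weqO_iff_of_conflation hw hY hPY (hw.conflation_id_zero D)
  exact (hzero C).1 (hM.weq_cancel_left d 0 hd (by rwa [comp_zero, hzero]))

variable (he : HasEnoughProj E)

include he

lemma isCompleteCP (hX : AdditivelyClosed X) : IsCompleteCP E X Y := by
  refine fun A ↦ ⟨?_, ?_⟩
  · obtain ⟨Z, j, q, -, hj, hq⟩ := hM.fact_right (0 : (0 : 𝒜) ⟶ A)
    obtain ⟨K, k, hk, hK⟩ := (fibO_and_weqO_iff hw he hY hPY).1 hq
    obtain rfl : j = 0 := (isZero_zero 𝒜).eq_of_src _ _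
    exact ⟨K, Z, k, q, hk, (cofibrant_coFibO_iff hX).1 hj, hK⟩
  · obtain ⟨Z, j, q, -, ⟨C, d, hd, hC⟩, hq⟩ := hM.fact_right (0 : A ⟶ (0 : 𝒜))
    obtain ⟨K, k, hk, hK⟩ := (fibO_and_weqO_iff hw he hY hPY).1 hq
    obtain ⟨s, hs⟩ := hk.exists_lift (𝟙 Z) ((isZero_zero 𝒜).eq_of_tgt _ _)
    exact ⟨Z, C, j, d, hd, hC, hY.mem_of_retract hs hK⟩

lemma ext1IsZero {A B : 𝒜} (hA : A ∈ X) (hB : B ∈ Y) : Ext1IsZero E A B :=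
  ext1IsZero_iff_exists_section.2 fun i d hid ↦ by
    obtain ⟨hF, hW⟩ := (fibO_and_weqO_iff hw he hY hPY).2 ⟨B, i, hid, hB⟩
    obtain ⟨s, -, hs⟩ := hM.lifting_right (0 : (0 : 𝒜) ⟶ A) d 0 (𝟙 A)
      ⟨A, 𝟙 A, E.id_deflation A, hA⟩ hF hW (by simp)
    exact ⟨s, hs⟩

end IsModelStructure

theorem IsExactModelStr.isCotorsionPair_and_isCompleteCP_and_isHereditaryCP (hw : IsWIC E)
    {X Y : Set 𝒜} (hX : AdditivelyClosed X) (hY : AdditivelyClosed Y)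
    (hM : IsExactModelStr E (CoFibO E X) (FibO (X ∩ Y)) (WeqO E (X ∩ Y) Y)) :
    IsCotorsionPair E X Y ∧ IsCompleteCP E X Y ∧ IsHereditaryCP E X Y := by
  have he := hM.hasEnoughProj hw
  have hP := hM.inter_eq_projectives hw hX hY
  have hPY : E.projectives ⊆ Y := hP.ge.trans Set.inter_subset_right
  have hM' := hM.1
  rw [hP] at hM'
  have hcc := hM'.isCompleteCP hw hY hPY he hX
  have hc := hcc.isCotorsionPair hX hY fun _ hA _ hB ↦ hM'.ext1IsZero hw hY hPY he hA hB
  have hcoker {K A B : 𝒜} (i : K ⟶ A) (d : A ⟶ B) (h : E.conflation i d) :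
      K ∈ Y → A ∈ Y → B ∈ Y := hM'.right_of_cokernel hw hY hPY h
  exact ⟨hc, hcc, fun i d h ↦ hc.left_of_kernel hw hcc hcoker h, hcoker⟩

end

/-- Characterization of generalized projective complete cotorsion pairs via
projective/exact `ω`-model structures. -/
theorem stmt_19 (E : ExactStructure 𝒜) (hwic : IsWIC E) (X Y : Set 𝒜)
    (hX : AdditivelyClosed X) (hY : AdditivelyClosed Y) :
    (((IsCotorsionPair E X Y ∧ IsCompleteCP E X Y ∧ IsThick E Y ∧
        X ∩ Y = {P : 𝒜 | IsProjObj E P}) ∧ HasEnoughProj E) ↔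
      (IsCotorsionPair E X Y ∧ IsCompleteCP E X Y ∧ IsHereditaryCP E X Y ∧
        HasEnoughProj E ∧ X ∩ Y = {P : 𝒜 | IsProjObj E P})) ∧
    ((IsCotorsionPair E X Y ∧ IsCompleteCP E X Y ∧ IsHereditaryCP E X Y ∧
        HasEnoughProj E ∧ X ∩ Y = {P : 𝒜 | IsProjObj E P}) ↔
      IsExactModelStr E (CoFibO E X) (FibO (X ∩ Y)) (WeqO E (X ∩ Y) Y)) ∧
    (IsExactModelStr E (CoFibO E X) (FibO (X ∩ Y)) (WeqO E (X ∩ Y) Y) ↔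
      IsProjectiveModelStr E (CoFibO E X) (FibO (X ∩ Y)) (WeqO E (X ∩ Y) Y)) := by
  refine ⟨?_, ⟨?_, fun hM ↦ ?_⟩, fun hM ↦ ⟨hM, fibrant_fibO _⟩, And.left⟩
  · constructor
    · rintro ⟨⟨hc, hcc, hT, hP⟩, he⟩
      exact ⟨hc, hcc, (hc.isThick_right_iff_isHereditaryCP hwic hcc hP.subset).1 hT, he, hP⟩
    · rintro ⟨hc, hcc, hH, he, hP⟩
      exact ⟨⟨hc, hcc, (hc.isThick_right_iff_isHereditaryCP hwic hcc hP.subset).2 hH, hP⟩, he⟩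
  · rintro ⟨hc, hcc, hH, he, hP⟩
    have hT := (hc.isThick_right_iff_isHereditaryCP hwic hcc hP.subset).2 hH
    rw [hP]
    exact hc.isExactModelStr hwic he hcc hX hY hT (hP.ge.trans Set.inter_subset_left)
      (hP.ge.trans Set.inter_subset_right)
  · obtain ⟨hc, hcc, hH⟩ := hM.isCotorsionPair_and_isCompleteCP_and_isHereditaryCP hwic hX hY
    exact ⟨hc, hcc, hH, hM.hasEnoughProj hwic, hM.inter_eq_projectives hwic hX hY⟩
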